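/- There exist 4×4 matrices d⁰, d¹ over R = ℂ[u,v,x,y] with the following properties, where f = x³ + y⁵ − u^{30} − v²: (i) d¹·d⁰ = f·1 and d⁰·d¹ = f·1, i.e. (d⁰, d¹) is a rank-four matrix factorisation of V^{(E₈)}(x,y) − V^{(A_{29})}(u,v); (ii) there exist rational numbers α₁,…,α₄ and β₁,…,β₄ such that for all i, j the (i,j) entry of d¹ is weighted homogeneous of degree 1 + α_j − β_i and the (i,j) entry of d⁰ is weighted homogeneous of degree 1 + β_j − α_i, for the weights w(u) = 1/15, w(v) = 1, w(x) = 2/3, w(y) = 2/5 (so the factorisation is graded); (iii) writing d = [[0, d¹], [d⁰, 0]] for the 8×8 twisted differential and S = str(∂_u d · ∂_v d · ∂_x d · ∂_y d) ∈ R, the coefficient of the monomial u^{28} v⁰ x⁰ y⁰ in S is non-zero and the coefficient of the monomial u⁰ v⁰ x¹ y³ in S is non-zero (i.e. both the right and the left quantum dimension are non-zero). -/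

import Mathlib

/-! If a function `F` on affine 3-space has the shape of Curto and Morrison's universal flop of
length two, `F = A p² + 2 B p q + C q² - (A C - B²) t²`, then `F` is the square of the 4×4 matrix
`mfMat A B C p q t`, so `mfMat - v` and `mfMat + v` factor `F - v²`. The threefold
`x³ + y⁵ - u³⁰ - v²` admits a small resolution by Brieskorn's simultaneous resolution (30 is the
Coxeter number of `E₈`), so a presentation of `x³ + y⁵ - u³⁰` in this shape is to be expected.

Take `p, q, A, B, C` of degrees 10, 6, 10, 14, 18 (with `u` of degree 1, `y` of degree 6 and `x` of
degree 10) and `t` proportional to `u`, deforming `x³ + y⁵ = x · x² + y³ · y²`. Up to gauge, such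
a presentation depends on two scalars `P, Q` subject to two equations (`mf_scalar`), and these
have a solution in `ℚ(√5, √(30 + 6√5))` for which the coefficient of `u³⁰` does not vanish
(`exists_params`). Rescaling `u` by a constant `k` turns that coefficient into `-1`.

Since `∂_v d⁰ = -1` and `∂_v d¹ = 1`, the supertrace is `-2 tr(∂_u φ ∂_x φ ∂_y φ)` with
`φ = mfMat`. By homogeneity it is a combination of the eleven monomials of degree 28, computed in
`trace_eq`; the two coefficients in question are checked to be non-zero. -/

open MvPolynomial

noncomputable section

/-- The polynomial ring `R = ℂ[u,v,x,y]`. -/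
abbrev R4 : Type := MvPolynomial (Fin 4) ℂ

def u : R4 := X 0
def v : R4 := X 1
def x : R4 := X 2
def y : R4 := X 3

/-- The exponent vector of the monomial `u^a v^b x^c y^e`. -/
def mon (a b c e : ℕ) : Fin 4 →₀ ℕ :=
  Finsupp.single 0 a + Finsupp.single 1 b + Finsupp.single 2 c + Finsupp.single 3 e

/-- A polynomial is weighted homogeneous of degree `q` for the weights `w`. -/
def WHom (w : Fin 4 → ℚ) (q : ℚ) (p : R4) : Prop :=
  ∀ m ∈ p.support, (∑ i : Fin 4, (m i : ℚ) * w i) = q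

/-- Entrywise partial derivative of a matrix of polynomials. -/
def pd {m n : Type} (i : Fin 4) (M : Matrix m n R4) : Matrix m n R4 :=
  M.map fun p => pderiv i p

/-- The supertrace of a `2r × 2r` block matrix. -/
def str {r : ℕ} (M : Matrix (Fin r ⊕ Fin r) (Fin r ⊕ Fin r) R4) : R4 :=
  Matrix.trace M.toBlocks₁₁ - Matrix.trace M.toBlocks₂₂

/-! ### The matrix attached to the universal flop of length two -/

/-- A 4×4 matrix with square `A p² + 2 B p q + C q² - (A C - B²) t²`. -/
def mfMat {S : Type} [CommRing S] (A B C p q t : S) : Matrix (Fin 4) (Fin 4) S :=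
  !![0, -t, p, q;
     t * (A * C - B ^ 2), 0, B * p + C * q, -(A * p + B * q);
     A * p + B * q, q, t * B, -(t * A);
     B * p + C * q, -p, t * C, -(t * B)]

/-- The entrywise derivative of `mfMat A B C p q t` when `A', …, t'` are the derivatives of
`A, …, t`. -/
def mfMatDer {S : Type} [CommRing S] (A B C p q t A' B' C' p' q' t' : S) :
    Matrix (Fin 4) (Fin 4) S :=
  !![0, -t', p', q';
     t' * (A * C - B ^ 2) + t * (A' * C + A * C' - 2 * B * B'), 0,
       B' * p + B * p' + C' * q + C * q', -(A' * p + A * p' + B' * q + B * q');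
     A' * p + A * p' + B' * q + B * q', q', t' * B + t * B', -(t' * A + t * A');
     B' * p + B * p' + C' * q + C * q', -p', t' * C + t * C', -(t' * B + t * B')]

lemma mfMat_mul_self {S : Type} [CommRing S] (A B C p q t : S) :
    mfMat A B C p q t * mfMat A B C p q t =
      (A * p ^ 2 + 2 * B * p * q + C * q ^ 2 - (A * C - B ^ 2) * t ^ 2) •
        (1 : Matrix (Fin 4) (Fin 4) S) := by
  ext i j
  fin_cases i <;> fin_cases j <;>
    simp [mfMat, Matrix.mul_apply, Fin.sum_univ_four] <;> ring

lemma pd_mfMat (i : Fin 4) (A B C p q t : R4) :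
    pd i (mfMat A B C p q t) = mfMatDer A B C p q t (pderiv i A) (pderiv i B) (pderiv i C)
      (pderiv i p) (pderiv i q) (pderiv i t) := by
  ext1 a b
  fin_cases a <;> fin_cases b <;>
    simp [pd, mfMat, mfMatDer, pow_two, Derivation.leibniz] <;> ring

lemma pd_add_scalar_v (i : Fin 4) (hi : i ≠ 1) (M : Matrix (Fin 4) (Fin 4) R4) (s : ℂ) :
    pd i (M + (C s * v) • (1 : Matrix (Fin 4) (Fin 4) R4)) = pd i M := by
  ext1 a b
  have : pderiv i v = 0 := by simp [v, pderiv_X, hi.symm]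
  by_cases h : a = b <;> simp [pd, h, Derivation.leibniz, this]

lemma pd_one_add_scalar_v (M : Matrix (Fin 4) (Fin 4) R4) (hM : pd 1 M = 0) (s : ℂ) :
    pd 1 (M + (C s * v) • (1 : Matrix (Fin 4) (Fin 4) R4)) = (C s : R4) • 1 := by
  ext1 a b
  have h1 : pderiv 1 (M a b) = 0 := congrFun (congrFun hM a) b
  have h2 : pderiv 1 v = 1 := by simp [v]
  by_cases h : a = b
  · subst h
    simp [pd, h1, h2, Derivation.leibniz]
  · simp [pd, h, h1]

/-- For a block matrix `d` with off-diagonal blocks `M ± v`, where `M` does not involve `v`, the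
supertrace reduces to a trace of `4 × 4` matrices. -/
lemma str_eq (M : Matrix (Fin 4) (Fin 4) R4) (hM : pd 1 M = 0)
    (d : Matrix (Fin 4 ⊕ Fin 4) (Fin 4 ⊕ Fin 4) R4)
    (hd : d = Matrix.fromBlocks 0 (M + (C 1 * v) • (1 : Matrix (Fin 4) (Fin 4) R4))
      (M + (C (-1) * v) • (1 : Matrix (Fin 4) (Fin 4) R4)) 0) :
    str (pd 0 d * pd 1 d * pd 2 d * pd 3 d) = -2 * Matrix.trace (pd 0 M * pd 2 M * pd 3 M) := by
  have key : ∀ i, pd i d = Matrix.fromBlocks 0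
      (pd i (M + (C 1 * v) • (1 : Matrix (Fin 4) (Fin 4) R4)))
      (pd i (M + (C (-1) * v) • (1 : Matrix (Fin 4) (Fin 4) R4))) 0 := by
    intro i
    subst hd
    ext1 a b
    rcases a with a | a <;> rcases b with b | b <;> simp [pd]
  simp only [key]
  rw [pd_one_add_scalar_v M hM, pd_one_add_scalar_v M hM]
  simp only [pd_add_scalar_v 0 (by decide), pd_add_scalar_v 2 (by decide),
    pd_add_scalar_v 3 (by decide)]
  simp only [str, Matrix.fromBlocks_multiply, Matrix.toBlocks_fromBlocks₁₁,
    Matrix.toBlocks_fromBlocks₂₂]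
  simp [Matrix.trace_neg]
  ring

/-! ### The polynomials `A, B, C, p, q` -/

/-- The polynomial `p`, as a function of `x`, the rescaled variable `U` and the parameter `P`. -/
def pp {S : Type} [CommRing S] (P x U : S) : S := x - 2 * P * U ^ 10

/-- The polynomial `q`. -/
def qq {S : Type} [CommRing S] (Q y U : S) : S := y - Q * U ^ 6

/-- The polynomial `A`, in terms of `p`. -/
def aa {S : Type} [CommRing S] (P p U : S) : S := p + 6 * P * U ^ 10

/-- The scalar `c₂` occurring in `B` and in `C`. -/
def c2 {S : Type} [CommRing S] (P Q : S) : S := 10 * Q ^ 2 + 24 * P + 512 - 160 * Q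

/-- The polynomial `B`, in terms of `q`. -/
def bb {S : Type} [CommRing S] (P Q q U : S) : S :=
  2 * q ^ 2 * U ^ 2 + (10 * Q - 32) * q * U ^ 8 + 2 * c2 P Q * U ^ 14

/-- The polynomial `C`, in terms of `q`. -/
def cc {S : Type} [CommRing S] (P Q q U : S) : S :=
  q ^ 3 - (16 - 5 * Q) * q ^ 2 * U ^ 6 + c2 P Q * q * U ^ 12 - 3 * P ^ 2 * U ^ 18

/-- The coefficient of `U³⁰` in the resulting presentation. -/
def ee {S : Type} [CommRing S] (P Q : S) : S := 64 * P ^ 3 + 16 * c2 P Q ^ 2 - Q ^ 5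

/-- The first equation on the parameters. -/
def eq1 {S : Type} [CommRing S] (P Q : S) : S :=
  3 * P ^ 2 + 120 * P * Q - 1152 * P + 10 * Q ^ 3 - 720 * Q ^ 2 + 7680 * Q - 20480

/-- The second equation on the parameters. -/
def eq2 {S : Type} [CommRing S] (P Q : S) : S :=
  576 * P ^ 2 + 240 * P * Q ^ 2 - 7680 * P * Q + 24576 * P + 5 * Q ^ 4 - 1600 * Q ^ 3
    + 30720 * Q ^ 2 - 163840 * Q + 262144

/-- Up to a factor, the coefficient of `u²⁸` in the supertrace. -/
def k28 {S : Type} [CommRing S] (P Q : S) : S :=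
  -1440 * P^3 - 18720 * P^2 * Q - 384000 * P^2 - 3060 * P * Q^3 - 147840 * P * Q^2
    + 4792320 * P * Q - 17694720 * P - 30240 * Q^4 + 1370880 * Q^3 - 20275200 * Q^2
    + 108134400 * Q - 188743680

lemma mf_scalar {S : Type} [CommRing S] (P Q x y U : S) (h1 : eq1 P Q = 0) (h2 : eq2 P Q = 0) :
    let p := pp P x U
    let q := qq Q y U
    let A := aa P p U
    let B := bb P Q q U
    let C := cc P Q q U
    A * p ^ 2 + 2 * B * p * q + C * q ^ 2 - (A * C - B ^ 2) * (2 * U) ^ 2 =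
      x ^ 3 + y ^ 5 + ee P Q * U ^ 30 := by
  simp only [pp, qq, aa, bb, cc, ee, eq1, eq2, c2] at *
  linear_combination (-(y - Q * U ^ 6) ^ 2 * U ^ 18) * h1 - (y - Q * U ^ 6) * U ^ 24 * h2

/-- The parameters live in `ℚ(w, z)` with `w = √5` and `z = (5 + w + √(30 + 6w)) / 2`. The
non-vanishing of `ee` and `k28` is certified by explicit inverses in that field. -/
lemma exists_params : ∃ P Q k : ℂ, eq1 P Q = 0 ∧ eq2 P Q = 0 ∧ ee P Q * k ^ 30 = -1 ∧
    k28 P Q ≠ 0 := by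
  obtain ⟨w, hw⟩ := IsAlgClosed.exists_pow_nat_eq (5 : ℂ) (n := 2) (by norm_num)
  obtain ⟨r, hr⟩ := IsAlgClosed.exists_pow_nat_eq (30 + 6 * w : ℂ) (n := 2) (by norm_num)
  obtain ⟨z, hz⟩ : ∃ z : ℂ, z ^ 2 = (5 + w) * z - w :=
    ⟨(5 + w + r) / 2, by linear_combination hr / 4 - hw / 4⟩
  obtain ⟨P, hP⟩ : ∃ P : ℂ, P = -1856 - 2048 / 3 * w + 896 / 3 * z + 256 / 3 * z * w := ⟨_, rfl⟩
  obtain ⟨Q, hQ⟩ : ∃ Q : ℂ, Q = 32 + 32 * w - 32 / 5 * z * w := ⟨_, rfl⟩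
  have h1 : eq1 P Q = 0 := by
    subst hP hQ
    simp only [eq1]
    grind
  have h2 : eq2 P Q = 0 := by
    subst hP hQ
    simp only [eq2]
    grind
  have h3 : ee P Q * (202757025 / 134217728 + 181351395 / 268435456 * w
      - 1253607915 / 268435456 * z - 560630505 / 268435456 * z * w) = 1 := by
    subst hP hQ
    simp only [ee, c2]
    grind
  have h4 : k28 P Q * (-11102733 / 1073741824 - 4965293 / 1073741824 * w
      + 34323037 / 1073741824 * z + 15349729 / 1073741824 * z * w) = 1 := by
    subst hP hQ
    simp only [k28]
    grind
  obtain ⟨k, hk⟩ := IsAlgClosed.exists_pow_nat_eq (-(ee P Q)⁻¹) (n := 30) (by norm_num)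
  refine ⟨P, Q, k, h1, h2, ?_, left_ne_zero_of_mul_eq_one h4⟩
  rw [hk, mul_neg, mul_inv_cancel₀ (left_ne_zero_of_mul_eq_one h3)]

/-! ### Monomials and constants -/

lemma C_num (n : ℕ) [n.AtLeastTwo] : (C (ofNat(n) : ℂ) : R4) = ofNat(n) := map_ofNat C n

lemma c2_C (P Q : ℂ) : (c2 (C P) (C Q) : R4) = C (c2 P Q) := by
  simp [c2, C_num]

lemma mon_inj {a b c e a' b' c' e' : ℕ} :
    mon a b c e = mon a' b' c' e' ↔ a = a' ∧ b = b' ∧ c = c' ∧ e = e' := by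
  constructor
  · intro h
    refine ⟨?_, ?_, ?_, ?_⟩
    · simpa [mon] using DFunLike.congr_fun h 0
    · simpa [mon] using DFunLike.congr_fun h 1
    · simpa [mon] using DFunLike.congr_fun h 2
    · simpa [mon] using DFunLike.congr_fun h 3
  · rintro ⟨rfl, rfl, rfl, rfl⟩
    rfl

lemma monomial_mon (a b c e : ℕ) (s : ℂ) :
    monomial (mon a b c e) s = C s * u ^ a * v ^ b * x ^ c * y ^ e := by
  simp only [mon, u, v, x, y, X_pow_eq_monomial, C_mul_monomial, monomial_mul, mul_one]

/-! ### The trace of the product of the three derivatives -/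

lemma trace_eq_ring {S : Type} [CommRing S] {P Q k x y U p q t A B C : S}
    {p₀ q₀ t₀ A₀ B₀ C₀ p₂ q₂ t₂ A₂ B₂ C₂ p₃ q₃ t₃ A₃ B₃ C₃ : S}
    (hp : p = pp P x U) (hq : q = qq Q y U) (ht : t = 2 * U)
    (hA : A = aa P p U) (hB : B = bb P Q q U) (hC : C = cc P Q q U)
    (hp₀ : p₀ = -20 * P * U ^ 9 * k) (hq₀ : q₀ = -6 * Q * U ^ 5 * k) (ht₀ : t₀ = 2 * k)
    (hA₀ : A₀ = 40 * P * U ^ 9 * k)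
    (hB₀ : B₀ = B₃ * q₀ + (4 * q ^ 2 * U + 8 * (10 * Q - 32) * q * U ^ 7
      + 28 * c2 P Q * U ^ 13) * k)
    (hC₀ : C₀ = C₃ * q₀ + (-6 * (16 - 5 * Q) * q ^ 2 * U ^ 5
      + 12 * c2 P Q * q * U ^ 11 - 54 * P ^ 2 * U ^ 17) * k)
    (hp₂ : p₂ = 1) (hq₂ : q₂ = 0) (ht₂ : t₂ = 0) (hA₂ : A₂ = 1) (hB₂ : B₂ = 0) (hC₂ : C₂ = 0)
    (hp₃ : p₃ = 0) (hq₃ : q₃ = 1) (ht₃ : t₃ = 0) (hA₃ : A₃ = 0)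
    (hB₃ : B₃ = 4 * q * U ^ 2 + (10 * Q - 32) * U ^ 8)
    (hC₃ : C₃ = 3 * q ^ 2 - 2 * (16 - 5 * Q) * q * U ^ 6 + c2 P Q * U ^ 12) :
    Matrix.trace (mfMatDer A B C p q t A₀ B₀ C₀ p₀ q₀ t₀ * mfMatDer A B C p q t A₂ B₂ C₂ p₂ q₂ t₂
      * mfMatDer A B C p q t A₃ B₃ C₃ p₃ q₃ t₃) =
    k * (24 * x ^ 2 * y * U ^ 2 + (36 * Q - 192) * x ^ 2 * U ^ 8 + 30 * x * y ^ 3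
      + (210 * Q - 960) * x * y ^ 2 * U ^ 6
      + (3120 * P + 390 * Q ^ 2 - 12480 * Q + 46080) * x * y * U ^ 12
      + (-360 * P ^ 2 - 720 * P * Q - 7680 * P - 630 * Q ^ 3 + 13440 * Q ^ 2 - 46080 * Q)
        * x * U ^ 18
      - 240 * y ^ 4 * U ^ 4 + (660 * P - 2640 * Q + 11520) * y ^ 3 * U ^ 10
      + (1020 * P * Q - 32640 * P - 12240 * Q ^ 2 + 195840 * Q - 614400) * y ^ 2 * U ^ 16
      + (9120 * P ^ 2 + 1380 * P * Q ^ 2 - 165120 * P * Q + 737280 * P - 26640 * Q ^ 3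
        + 725760 * Q ^ 2 - 4915200 * Q + 9830400) * y * U ^ 22
      + k28 P Q * U ^ 28) := by
  subst hp₂ hq₂ ht₂ hA₂ hB₂ hC₂ hp₃ hq₃ ht₃ hA₃
  simp [Matrix.trace, Matrix.diag, Matrix.mul_apply, Fin.sum_univ_four, mfMatDer]
  simp only [hC₀, hB₀, hB₃, hC₃, hA₀, hp₀, hq₀, ht₀, hA, hB, hC, ht, hp, hq]
  simp only [k28, pp, qq, aa, bb, cc, c2]
  ring

/-! ### The matrix `φ` and its derivatives -/

lemma pderiv_num (i : Fin 4) (n : ℕ) [n.AtLeastTwo] : pderiv i (ofNat(n) : R4) = 0 := by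
  rw [← C_num, pderiv_C]

lemma pderiv_pp (i : Fin 4) (P : ℂ) (a U : R4) :
    pderiv i (pp (C P) a U) = pderiv i a - 20 * C P * U ^ 9 * pderiv i U := by
  simp [pp, Derivation.leibniz, Derivation.leibniz_pow, pderiv_num]
  ring

lemma pderiv_qq (i : Fin 4) (Q : ℂ) (a U : R4) :
    pderiv i (qq (C Q) a U) = pderiv i a - 6 * C Q * U ^ 5 * pderiv i U := by
  simp [qq, Derivation.leibniz, Derivation.leibniz_pow]
  ring

lemma pderiv_aa (i : Fin 4) (P : ℂ) (p U : R4) :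
    pderiv i (aa (C P) p U) = pderiv i p + 60 * C P * U ^ 9 * pderiv i U := by
  simp [aa, Derivation.leibniz, Derivation.leibniz_pow, pderiv_num]
  ring

lemma pderiv_bb (i : Fin 4) (P Q : ℂ) (q U : R4) :
    pderiv i (bb (C P) (C Q) q U) =
      (4 * q * U ^ 2 + (10 * C Q - 32) * U ^ 8) * pderiv i q
      + (4 * q ^ 2 * U + 8 * (10 * C Q - 32) * q * U ^ 7
        + 28 * c2 (C P) (C Q) * U ^ 13) * pderiv i U := by
  simp [bb, c2_C, Derivation.leibniz, Derivation.leibniz_pow, pderiv_num]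
  ring

lemma pderiv_cc (i : Fin 4) (P Q : ℂ) (q U : R4) :
    pderiv i (cc (C P) (C Q) q U) =
      (3 * q ^ 2 - 2 * (16 - 5 * C Q) * q * U ^ 6 + c2 (C P) (C Q) * U ^ 12) * pderiv i q
      + (-6 * (16 - 5 * C Q) * q ^ 2 * U ^ 5 + 12 * c2 (C P) (C Q) * q * U ^ 11
        - 54 * C P ^ 2 * U ^ 17) * pderiv i U := by
  simp [cc, c2_C, Derivation.leibniz, Derivation.leibniz_pow, pderiv_num]
  ring

/-- The matrix `φ` over `ℂ[u,v,x,y]` for the parameters `P, Q` and the scaling factor `k` of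
`u`. -/
def phi (P Q k : ℂ) : Matrix (Fin 4) (Fin 4) R4 :=
  mfMat (aa (C P) (pp (C P) x (C k * u)) (C k * u))
    (bb (C P) (C Q) (qq (C Q) y (C k * u)) (C k * u))
    (cc (C P) (C Q) (qq (C Q) y (C k * u)) (C k * u))
    (pp (C P) x (C k * u)) (qq (C Q) y (C k * u)) (2 * (C k * u))

lemma pd_one_phi (P Q k : ℂ) : pd 1 (phi P Q k) = 0 := by
  have e1 : pderiv 1 (C k * u) = 0 := by simp [u, pderiv_X, Derivation.leibniz]
  have e2 : pderiv 1 x = 0 := by simp [x, pderiv_X]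
  have e3 : pderiv 1 y = 0 := by simp [y, pderiv_X]
  have e4 : pderiv 1 (2 * (C k * u)) = 0 := by
    rw [Derivation.leibniz, e1, pderiv_num]
    simp
  rw [phi, pd_mfMat, e4]
  simp only [pderiv_aa, pderiv_bb, pderiv_cc, pderiv_pp, pderiv_qq, e1, e2, e3, mul_zero, sub_zero,
    add_zero]
  ext1 a b
  fin_cases a <;> fin_cases b <;> simp [mfMatDer]

lemma trace_eq (P Q k : ℂ) :
    Matrix.trace (pd 0 (phi P Q k) * pd 2 (phi P Q k) * pd 3 (phi P Q k)) =
      monomial (mon 2 0 2 1) (24 * k ^ 3) + monomial (mon 8 0 2 0) ((36 * Q - 192) * k ^ 9)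
      + monomial (mon 0 0 1 3) (30 * k) + monomial (mon 6 0 1 2) ((210 * Q - 960) * k ^ 7)
      + monomial (mon 12 0 1 1) ((3120 * P + 390 * Q^2 - 12480 * Q + 46080) * k ^ 13)
      + monomial (mon 18 0 1 0) ((-360 * P^2 - 720 * P * Q - 7680 * P - 630 * Q^3 + 13440 * Q^2
          - 46080 * Q) * k ^ 19)
      + monomial (mon 4 0 0 4) (-240 * k ^ 5)
      + monomial (mon 10 0 0 3) ((660 * P - 2640 * Q + 11520) * k ^ 11)
      + monomial (mon 16 0 0 2) ((1020 * P * Q - 32640 * P - 12240 * Q^2 + 195840 * Q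
          - 614400) * k ^ 17)
      + monomial (mon 22 0 0 1) ((9120 * P^2 + 1380 * P * Q^2 - 165120 * P * Q + 737280 * P
          - 26640 * Q^3 + 725760 * Q^2 - 4915200 * Q + 9830400) * k ^ 23)
      + monomial (mon 28 0 0 0) (k28 P Q * k ^ 29) := by
  have hu0 : pderiv 0 (C k * u) = C k := by simp [u, Derivation.leibniz]
  have hx0 : pderiv 0 x = 0 := by simp [x, pderiv_X]
  have hy0 : pderiv 0 y = 0 := by simp [y, pderiv_X]
  have hu2 : pderiv 2 (C k * u) = 0 := by simp [u, pderiv_X, Derivation.leibniz]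
  have hx2 : pderiv 2 x = 1 := by simp [x]
  have hy2 : pderiv 2 y = 0 := by simp [y, pderiv_X]
  have hu3 : pderiv 3 (C k * u) = 0 := by simp [u, pderiv_X, Derivation.leibniz]
  have hx3 : pderiv 3 x = 0 := by simp [x, pderiv_X]
  have hy3 : pderiv 3 y = 1 := by simp [y]
  have ht : ∀ i, pderiv i (2 * (C k * u)) = 2 * pderiv i (C k * u) := by
    intro i
    rw [Derivation.leibniz, pderiv_num]
    simp
  rw [phi, pd_mfMat, pd_mfMat, pd_mfMat]
  simp only [ht, pderiv_aa, pderiv_bb, pderiv_cc, pderiv_pp, pderiv_qq, hu0, hx0, hy0, hu2, hx2,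
    hy2, hu3, hx3, hy3]
  rw [trace_eq_ring (P := C P) (Q := C Q) (k := C k) (x := x) (y := y) (U := C k * u)
    rfl rfl rfl rfl rfl rfl]
  · simp only [monomial_mon, k28, map_mul, map_add, map_sub, map_neg, map_pow, C_num]
    ring
  all_goals ring

/-! ### Homogeneity -/

lemma WHom_of_isWeightedHomogeneous {w : Fin 4 → ℚ} {q r : ℚ} {p : R4}
    (h : IsWeightedHomogeneous w p r) (hq : r = q) : WHom w q p := by
  intro m hm
  have := h (mem_support_iff.mp hm)
  rw [← hq, ← this, Finsupp.weight_apply, Finsupp.sum_fintype _ _ (by simp)]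
  simp

lemma isWeightedHomogeneous_num (w : Fin 4 → ℚ) (n : ℕ) [n.AtLeastTwo] :
    IsWeightedHomogeneous w (OfNat.ofNat n : R4) 0 := by
  rw [← map_ofNat C n]
  exact isWeightedHomogeneous_C _ _

lemma MvPolynomial.IsWeightedHomogeneous.congr_deg {w : Fin 4 → ℚ} {q r : ℚ} {p : R4}
    (h : IsWeightedHomogeneous w p r) (hq : r = q) : IsWeightedHomogeneous w p q := hq ▸ h

/-- The weights of `u, v, x, y`. -/
def wt : Fin 4 → ℚ := ![1/15, 1, 2/3, 2/5]

/-- The degree shifts; the same ones serve for both sides of the factorisation. -/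
def shift : Fin 4 → ℚ := ![0, -14/15, -1/3, -3/5]

lemma phi_hom (P Q k : ℂ) (i j : Fin 4) :
    IsWeightedHomogeneous wt (phi P Q k i j) (1 + shift j - shift i) := by
  have hC : ∀ s : ℂ, IsWeightedHomogeneous wt (C s : R4) 0 := isWeightedHomogeneous_C wt
  have hn : ∀ (n : ℕ) [n.AtLeastTwo], IsWeightedHomogeneous wt (OfNat.ofNat n : R4) 0 :=
    fun n _ => isWeightedHomogeneous_num wt n
  have hx : IsWeightedHomogeneous wt x (2/3) := isWeightedHomogeneous_X ℂ wt 2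
  have hy : IsWeightedHomogeneous wt y (2/5) := isWeightedHomogeneous_X ℂ wt 3
  have hU : IsWeightedHomogeneous wt (C k * u) (1/15) :=
    ((hC k).mul (isWeightedHomogeneous_X ℂ wt 0)).congr_deg (by simp [wt])
  have hc : IsWeightedHomogeneous wt (c2 (C P) (C Q) : R4) 0 := by
    rw [c2_C]
    exact hC _
  rw [phi]
  generalize C k * u = U at hU ⊢
  have hp : IsWeightedHomogeneous wt (pp (C P) x U) (2/3) :=
    hx.sub ((((hn 2).mul (hC P)).mul (hU.pow 10)).congr_deg (by norm_num))
  have hq : IsWeightedHomogeneous wt (qq (C Q) y U) (2/5) :=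
    hy.sub (((hC Q).mul (hU.pow 6)).congr_deg (by norm_num))
  generalize pp (C P) x U = p at hp ⊢
  generalize qq (C Q) y U = q at hq ⊢
  have hA : IsWeightedHomogeneous wt (aa (C P) p U) (2/3) :=
    hp.add ((((hn 6).mul (hC P)).mul (hU.pow 10)).congr_deg (by norm_num))
  have hB : IsWeightedHomogeneous wt (bb (C P) (C Q) q U) (14/15) :=
    (((((hn 2).mul (hq.pow 2)).mul (hU.pow 2)).congr_deg (by norm_num)).add
      ((((((hn 10).mul (hC Q)).congr_deg (add_zero 0)).sub (hn 32)).mul hq).mul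
        (hU.pow 8) |>.congr_deg (by norm_num))).add
      ((((hn 2).mul hc).mul (hU.pow 14)).congr_deg (by norm_num))
  have hCc : IsWeightedHomogeneous wt (cc (C P) (C Q) q U) (6/5) :=
    ((((hq.pow 3).congr_deg (by norm_num)).sub
      ((((hn 16).sub (((hn 5).mul (hC Q)).congr_deg (add_zero 0))).mul (hq.pow 2)).mul
        (hU.pow 6) |>.congr_deg (by norm_num))).add
      (((hc.mul hq).mul (hU.pow 12)).congr_deg (by norm_num))).sub
      ((((hn 3).mul ((hC P).pow 2)).mul (hU.pow 18)).congr_deg (by norm_num))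
  generalize aa (C P) p U = A at hA ⊢
  generalize bb (C P) (C Q) q U = B at hB ⊢
  generalize cc (C P) (C Q) q U = C' at hCc ⊢
  have ht : IsWeightedHomogeneous wt (2 * U) (1/15) :=
    ((hn 2).mul hU).congr_deg (zero_add _)
  generalize 2 * U = t at ht ⊢
  have hD : IsWeightedHomogeneous wt (A * C' - B ^ 2) (28/15) :=
    ((hA.mul hCc).congr_deg (by norm_num)).sub ((hB.pow 2).congr_deg (by norm_num))
  have hl : IsWeightedHomogeneous wt (A * p + B * q) (4/3) :=
    ((hA.mul hp).congr_deg (by norm_num)).add ((hB.mul hq).congr_deg (by norm_num))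
  have hm : IsWeightedHomogeneous wt (B * p + C' * q) (8/5) :=
    ((hB.mul hp).congr_deg (by norm_num)).add ((hCc.mul hq).congr_deg (by norm_num))
  have h0 : ∀ r, IsWeightedHomogeneous wt (0 : R4) r := isWeightedHomogeneous_zero ℂ wt
  fin_cases i <;> fin_cases j
  · exact h0 _
  · exact ht.neg.congr_deg (by norm_num [shift])
  · exact hp.congr_deg (by norm_num [shift])
  · exact hq.congr_deg (by norm_num [shift])
  · exact (ht.mul hD).congr_deg (by norm_num [shift])
  · exact h0 _
  · exact hm.congr_deg (by norm_num [shift])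
  · exact hl.neg.congr_deg (by norm_num [shift])
  · exact hl.congr_deg (by norm_num [shift])
  · exact hq.congr_deg (by norm_num [shift])
  · exact (ht.mul hB).congr_deg (by norm_num [shift])
  · exact (ht.mul hA).neg.congr_deg (by norm_num [shift])
  · exact hm.congr_deg (by norm_num [shift])
  · exact hp.neg.congr_deg (by norm_num [shift])
  · exact (ht.mul hCc).congr_deg (by norm_num [shift])
  · exact (ht.mul hB).neg.congr_deg (by norm_num [shift])

lemma phi_add_hom (P Q k s : ℂ) (i j : Fin 4) :
    WHom wt (1 + shift j - shift i)
      ((phi P Q k + (C s * v) • (1 : Matrix (Fin 4) (Fin 4) R4)) i j) := by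
  refine WHom_of_isWeightedHomogeneous ((phi_hom P Q k i j).add ?_) rfl
  by_cases h : i = j
  · subst h
    have hv : IsWeightedHomogeneous wt (C s * v) (0 + 1) :=
      (isWeightedHomogeneous_C wt s).mul (isWeightedHomogeneous_X ℂ wt 1)
    simpa using hv
  · simpa [h] using isWeightedHomogeneous_zero ℂ wt _

/-! ### The factorisation -/

lemma phi_mul_self (P Q k : ℂ) (h1 : eq1 P Q = 0) (h2 : eq2 P Q = 0)
    (hk : ee P Q * k ^ 30 = -1) :
    phi P Q k * phi P Q k = (x ^ 3 + y ^ 5 - u ^ 30) • (1 : Matrix (Fin 4) (Fin 4) R4) := by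
  have h1' : eq1 (C P : R4) (C Q) = 0 := by
    have := congrArg (C : ℂ → R4) h1
    simpa [eq1, C_num] using this
  have h2' : eq2 (C P : R4) (C Q) = 0 := by
    have := congrArg (C : ℂ → R4) h2
    simpa [eq2, C_num] using this
  have hk' : ee (C P : R4) (C Q) * C k ^ 30 = -1 := by
    have := congrArg (C : ℂ → R4) hk
    simpa [ee, c2, C_num] using this
  rw [phi, mfMat_mul_self, mf_scalar _ _ _ _ _ h1' h2']
  have hs : x ^ 3 + y ^ 5 + ee (C P) (C Q) * (C k * u) ^ 30 = x ^ 3 + y ^ 5 - u ^ 30 := by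
    linear_combination u ^ 30 * hk'
  rw [hs]

lemma mul_conj (M : Matrix (Fin 4) (Fin 4) R4) (F a b : R4) (hM : M * M = F • 1)
    (hab : a + b = 0) : (M + a • 1) * (M + b • 1) = (F - a ^ 2) • 1 := by
  obtain rfl : b = -a := by linear_combination hab
  simp only [add_mul, mul_add, hM, Matrix.smul_mul, Matrix.mul_smul, one_mul, mul_one, smul_smul]
  module

theorem stmt6 :
    ∃ d0 d1 : Matrix (Fin 4) (Fin 4) R4,
      d1 * d0 = (x ^ 3 + y ^ 5 - u ^ 30 - v ^ 2) • (1 : Matrix (Fin 4) (Fin 4) R4) ∧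
      d0 * d1 = (x ^ 3 + y ^ 5 - u ^ 30 - v ^ 2) • (1 : Matrix (Fin 4) (Fin 4) R4) ∧
      (∃ α β : Fin 4 → ℚ, ∀ i j,
        WHom ![1/15, 1, 2/3, 2/5] (1 + α j - β i) (d1 i j) ∧
        WHom ![1/15, 1, 2/3, 2/5] (1 + β j - α i) (d0 i j)) ∧
      coeff (mon 28 0 0 0)
        (str (pd 0 (Matrix.fromBlocks 0 d1 d0 0) * pd 1 (Matrix.fromBlocks 0 d1 d0 0)
          * pd 2 (Matrix.fromBlocks 0 d1 d0 0) * pd 3 (Matrix.fromBlocks 0 d1 d0 0))) ≠ 0 ∧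
      coeff (mon 0 0 1 3)
        (str (pd 0 (Matrix.fromBlocks 0 d1 d0 0) * pd 1 (Matrix.fromBlocks 0 d1 d0 0)
          * pd 2 (Matrix.fromBlocks 0 d1 d0 0) * pd 3 (Matrix.fromBlocks 0 d1 d0 0))) ≠ 0 := by
  obtain ⟨P, Q, k, h1, h2, hk, h28⟩ := exists_params
  have hk0 : k ≠ 0 := by
    rintro rfl
    norm_num at hk
  have hM := phi_mul_self P Q k h1 h2 hk
  refine ⟨phi P Q k + (C (-1) * v) • 1, phi P Q k + (C 1 * v) • 1, ?_, ?_,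
    ⟨shift, shift, fun i j => ⟨phi_add_hom P Q k 1 i j, phi_add_hom P Q k (-1) i j⟩⟩, ?_, ?_⟩
  · rw [mul_conj _ _ _ _ hM (by simp)]
    simp
  · rw [mul_conj _ _ _ _ hM (by simp)]
    simp
  · rw [str_eq _ (pd_one_phi P Q k) _ rfl, trace_eq, ← map_ofNat C 2, ← C_neg, coeff_C_mul]
    simp [coeff_monomial, mon_inj, h28, hk0]
  · rw [str_eq _ (pd_one_phi P Q k) _ rfl, trace_eq, ← map_ofNat C 2, ← C_neg, coeff_C_mul]
    simp [coeff_monomial, mon_inj, hk0]
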